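/- Let G be an n-vertex graph of density p > 0, let P = {V₁,…,V_k} be a partition of V(G), and let Q be a refinement of P. If D(Q,P) ≥ x·p·n² for some x ≥ 0, then H(Q) − H(P) ≥ 2x²p. -/

import Mathlib

/-!
The proof is Pinsker's inequality in disguise. Put `a(U,U') = e(U,U')` and
`b(U,U') = |U||U'| d(V_i,V_j)` for `U ⊆ V_i`, `U' ⊆ V_j`; both have total mass `p n²`, their
`ℓ₁`-distance is `2 D(Q,P)`, and their relative entropy is `n² (H(Q) - H(P))`.

Pinsker's inequality rests on the pointwise bound
`t log t - t + 1 ≥ (3/2) (t-1)² / (t+2)`. Instead of summing it with Cauchy–Schwarz, the square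
is linearised by AM-GM with the parameter `x` (`pinsker_pointwise`), giving
`d log d - d log e - d + e ≥ 2x|d-e| - (2/3) x² (d+2e)`.
Weighting by `|U||U'|` and summing yields `n² (H(Q) - H(P)) ≥ 4xD - 2x²pn² ≥ 2x²pn²`.
The summations use only that the parts of `Q` inside a part `V_i` of `P` partition it.
-/

open Finset
open scoped Classical

/-- `eCnt G A B` is the number of ordered pairs `(u,v) ∈ A × B` with `uv` an edge of `G`. -/
noncomputable def eCnt {V : Type*} [Fintype V] (G : SimpleGraph V) (A B : Finset V) : ℕ :=
  ((A ×ˢ B).filter fun p => G.Adj p.1 p.2).card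

/-- The edge density `d(A,B)` between vertex subsets `A` and `B`. -/
noncomputable def dens {V : Type*} [Fintype V] (G : SimpleGraph V) (A B : Finset V) : ℝ :=
  eCnt G A B / (A.card * B.card)

/-- The function `H(x) = x ln x` (with `0 ln 0 = 0`, which holds for `Real.log`). -/
noncomputable def Hent (x : ℝ) : ℝ := x * Real.log x

/-- The entropy potential `H(P,P')` of a partition `P` of `A ⊆ V(G)` and a partition `P'`
of `A' ⊆ V(G)`: `H(P,P') = Σ_{W ∈ P, W' ∈ P'} (|W||W'|/(|A||A'|))·H(d(W,W'))`. -/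
noncomputable def pot {V : Type*} [Fintype V] [DecidableEq V] (G : SimpleGraph V)
    {A A' : Finset V} (P : Finpartition A) (P' : Finpartition A') : ℝ :=
  ∑ W ∈ P.parts, ∑ W' ∈ P'.parts,
    ((W.card : ℝ) * W'.card / ((A.card : ℝ) * A'.card)) * Hent (dens G W W')

/-- The density `d_G = 2|E|/|V|²` of a graph. -/
noncomputable def graphDensity {V : Type*} [Fintype V] (G : SimpleGraph V) : ℝ :=
  2 * G.edgeSet.ncard / (Fintype.card V : ℝ) ^ 2

/-- The `ℓ₁`-distance `D(Q,P)` between a partition `P` of the vertex set and a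
refinement `Q` of it:
`D(Q,P) = (1/2)·Σ_{V_i,V_j ∈ P} Σ_{U ∈ Q|_{V_i}, U' ∈ Q|_{V_j}} |U||U'|·|d(U,U') − d(V_i,V_j)|`,
where `Q|_{V}` consists of the parts of `Q` contained in `V`. -/
noncomputable def Ddist {V : Type*} [Fintype V] [DecidableEq V] (G : SimpleGraph V)
    {s : Finset V} (Q P : Finpartition s) : ℝ :=
  (1 / 2) * ∑ Vi ∈ P.parts, ∑ Vj ∈ P.parts,
    ∑ U ∈ Q.parts.filter (· ⊆ Vi), ∑ U' ∈ Q.parts.filter (· ⊆ Vj),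
      (U.card : ℝ) * U'.card * |dens G U U' - dens G Vi Vj|

/-- The function here is nonnegative by `log_pinsker_bound`, which, multiplied by `t`, is the
inequality `t log t - t + 1 ≥ (3/2) (t-1)² / (t+2)`. Its derivative has the sign of `t - 1`. -/
lemma hasDerivAt_pinsker_gap {t : ℝ} (ht : 0 < t) :
    HasDerivAt (fun t : ℝ => Real.log t - (t - 1) * (5 * t + 1) / (2 * t * (t + 2)))
      ((t - 1) ^ 3 / (t ^ 2 * (t + 2) ^ 2)) t := by
  have hid := hasDerivAt_id' t
  have hne : 2 * t * (t + 2) ≠ 0 := by positivity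
  have h := (Real.hasDerivAt_log ht.ne').sub
    ((((hid.sub_const 1).mul ((hid.const_mul 5).add_const 1))).div
      ((hid.const_mul 2).mul (hid.add_const 2)) hne)
  refine h.congr_deriv ?_
  simp only [Pi.mul_apply]
  field_simp
  ring

lemma log_pinsker_bound {t : ℝ} (ht : 0 < t) :
    (t - 1) * (5 * t + 1) / (2 * t * (t + 2)) ≤ Real.log t := by
  rcases le_total 1 t with h1 | h1
  · have hm : MonotoneOn (fun t : ℝ => Real.log t - (t - 1) * (5 * t + 1) / (2 * t * (t + 2)))
        (Set.Ici 1) := by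
      apply monotoneOn_of_deriv_nonneg (convex_Ici 1)
      · intro s hs
        exact (hasDerivAt_pinsker_gap
          (lt_of_lt_of_le one_pos hs)).continuousAt.continuousWithinAt
      · intro s hs
        rw [interior_Ici] at hs
        exact (hasDerivAt_pinsker_gap
          (lt_trans one_pos hs)).differentiableAt.differentiableWithinAt
      · intro s hs
        rw [interior_Ici] at hs
        have hs' : (1 : ℝ) < s := hs
        rw [(hasDerivAt_pinsker_gap (lt_trans one_pos hs)).deriv]
        have : 0 ≤ s - 1 := by linarith
        positivity
    have := hm (Set.mem_Ici.2 le_rfl) (Set.mem_Ici.2 h1) h1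
    simp at this
    linarith
  · have hm : AntitoneOn (fun t : ℝ => Real.log t - (t - 1) * (5 * t + 1) / (2 * t * (t + 2)))
        (Set.Icc t 1) := by
      apply antitoneOn_of_deriv_nonpos (convex_Icc t 1)
      · intro s hs
        exact (hasDerivAt_pinsker_gap
          (lt_of_lt_of_le ht hs.1)).continuousAt.continuousWithinAt
      · intro s hs
        rw [interior_Icc] at hs
        exact (hasDerivAt_pinsker_gap
          (lt_trans ht hs.1)).differentiableAt.differentiableWithinAt
      · intro s hs
        rw [interior_Icc] at hs
        rw [(hasDerivAt_pinsker_gap (lt_trans ht hs.1)).deriv]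
        apply div_nonpos_of_nonpos_of_nonneg
        · exact Odd.pow_nonpos (by decide) (by linarith [hs.2])
        · positivity
    have := hm (Set.left_mem_Icc.2 h1) (Set.right_mem_Icc.2 h1) h1
    simp at this
    linarith

/-- Linearised pointwise Pinsker inequality. If `e = 0`, both sides vanish by `h0`. -/
lemma pinsker_pointwise {d e : ℝ} (hd : 0 ≤ d) (he : 0 ≤ e) (h0 : e = 0 → d = 0) (x : ℝ) :
    2 * x * |d - e| - 2 / 3 * x ^ 2 * (d + 2 * e)
      ≤ d * Real.log d - d * Real.log e - d + e := by
  rcases he.eq_or_lt with he | he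
  · simp [← he, h0 he.symm]
  have hden : 0 < d + 2 * e := by linarith
  -- AM-GM: `2uv - v² ≤ u²` with `u² = (3/2)(d-e)²/(d+2e)` and `v² = (2/3)x²(d+2e)`.
  have hquad : 2 * x * |d - e| - 2 / 3 * x ^ 2 * (d + 2 * e)
      ≤ 3 / 2 * (d - e) ^ 2 / (d + 2 * e) := by
    rw [le_div_iff₀ hden, ← sq_abs (d - e)]
    nlinarith [sq_nonneg (3 * |d - e| - 2 * x * (d + 2 * e))]
  refine hquad.trans ?_
  rcases hd.eq_or_lt with hd | hd
  · rw [← hd, div_le_iff₀ (by linarith)]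
    nlinarith [sq_nonneg e]
  have hlog := mul_le_mul_of_nonneg_left (log_pinsker_bound (div_pos hd he)) hd.le
  rw [Real.log_div hd.ne' he.ne'] at hlog
  have heq : d * ((d / e - 1) * (5 * (d / e) + 1) / (2 * (d / e) * (d / e + 2)))
      = 3 / 2 * (d - e) ^ 2 / (d + 2 * e) + d - e := by
    field_simp
    ring
  rw [heq] at hlog
  linarith

section Partitions

set_option linter.unusedSectionVars false

variable {V : Type*} [DecidableEq V]

lemma sum_parts_sum {s : Finset V} (P : Finpartition s) (h : V → ℝ) :
    ∑ U ∈ P.parts, ∑ a ∈ U, h a = ∑ a ∈ s, h a := by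
  have := Finset.sum_biUnion (f := h) (t := (id : Finset V → Finset V)) P.disjoint
  rw [show P.parts.biUnion id = s from P.biUnion_parts] at this
  exact this.symm

/-- Each part of `Q` lies in exactly one part of `P`. -/
lemma sum_parts_filter {s : Finset V} {P Q : Finpartition s} (hQP : Q ≤ P)
    (F : Finset V → ℝ) :
    ∑ W ∈ P.parts, ∑ U ∈ Q.parts.filter (· ⊆ W), F U = ∑ U ∈ Q.parts, F U := by
  simp_rw [Finset.sum_filter]
  rw [Finset.sum_comm]
  refine Finset.sum_congr rfl fun U hU => ?_
  obtain ⟨W, hW, hUW⟩ := hQP hU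
  rw [Finset.sum_eq_single W]
  · exact if_pos hUW
  · intro W' hW' hne
    refine if_neg fun hUW' => ?_
    obtain ⟨a, ha⟩ := Q.nonempty_of_mem_parts hU
    exact hne (P.eq_of_mem_parts hW' hW (hUW' ha) (hUW ha))
  · exact fun h => absurd hW h

/-- The parts of `Q` inside a part `W` of `P` cover `W` exactly. -/
lemma sum_filter_sum {s : Finset V} {P Q : Finpartition s} (hQP : Q ≤ P) {W : Finset V}
    (hW : W ∈ P.parts) (h : V → ℝ) :
    ∑ U ∈ Q.parts.filter (· ⊆ W), ∑ a ∈ U, h a = ∑ a ∈ W, h a := by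
  rw [← Finset.sum_biUnion]
  · refine Finset.sum_congr ?_ fun _ _ => rfl
    ext a
    simp only [Finset.mem_biUnion, Finset.mem_filter]
    constructor
    · rintro ⟨U, ⟨-, hUW⟩, ha⟩
      exact hUW ha
    · intro ha
      obtain ⟨U, hU, haU⟩ := Q.exists_mem (P.le hW ha)
      obtain ⟨W', hW', hUW'⟩ := hQP hU
      exact ⟨U, ⟨hU, P.eq_of_mem_parts hW' hW (hUW' haU) ha ▸ hUW'⟩, haU⟩
  · exact Q.disjoint.subset fun U hU => (Finset.mem_filter.1 hU).1

variable [Fintype V] (G : SimpleGraph V)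

lemma eCnt_eq_sum (A B : Finset V) :
    (eCnt G A B : ℝ) = ∑ a ∈ A, ∑ b ∈ B, if G.Adj a b then (1 : ℝ) else 0 := by
  rw [eCnt, Finset.card_filter, Finset.sum_product]
  push_cast
  rfl

lemma card_mul_card_mul_dens (A B : Finset V) :
    (A.card : ℝ) * B.card * dens G A B = eCnt G A B := by
  by_cases h : (A.card : ℝ) * B.card = 0
  · have : eCnt G A B = 0 := by
      rcases mul_eq_zero.1 h with h | h <;>
      · have h' := Finset.card_eq_zero.1 (Nat.cast_eq_zero.1 h)
        simp [eCnt, h']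
    simp [h, this]
  · rw [_root_.dens, mul_div_cancel₀ _ h]

lemma dens_nonneg (A B : Finset V) : 0 ≤ dens G A B := by
  unfold _root_.dens
  positivity

lemma eCnt_mono {A B A' B' : Finset V} (hA : A ⊆ A') (hB : B ⊆ B') :
    eCnt G A B ≤ eCnt G A' B' :=
  Finset.card_le_card (Finset.filter_subset_filter _ (Finset.product_subset_product hA hB))

lemma sum_filter_eCnt {s : Finset V} {P Q : Finpartition s} (hQP : Q ≤ P) {A B : Finset V}
    (hA : A ∈ P.parts) (hB : B ∈ P.parts) :
    ∑ U ∈ Q.parts.filter (· ⊆ A), ∑ U' ∈ Q.parts.filter (· ⊆ B), (eCnt G U U' : ℝ)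
      = eCnt G A B := by
  simp_rw [eCnt_eq_sum]
  rw [← sum_filter_sum hQP hA]
  refine Finset.sum_congr rfl fun U _ => ?_
  rw [Finset.sum_comm]
  exact Finset.sum_congr rfl fun a _ => sum_filter_sum hQP hB _

lemma sum_filter_card {s : Finset V} {P Q : Finpartition s} (hQP : Q ≤ P) {A B : Finset V}
    (hA : A ∈ P.parts) (hB : B ∈ P.parts) :
    ∑ U ∈ Q.parts.filter (· ⊆ A), ∑ U' ∈ Q.parts.filter (· ⊆ B), (U.card : ℝ) * U'.card
      = (A.card : ℝ) * B.card := by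
  have key : ∀ {W : Finset V}, W ∈ P.parts →
      ∑ U ∈ Q.parts.filter (· ⊆ W), (U.card : ℝ) = W.card := fun hW => by
    simpa using sum_filter_sum hQP hW fun _ => 1
  rw [← Finset.sum_mul_sum, key hA, key hB]

lemma sum_eCnt_parts (P : Finpartition (univ : Finset V)) :
    ∑ A ∈ P.parts, ∑ B ∈ P.parts, (eCnt G A B : ℝ)
      = graphDensity G * (Fintype.card V : ℝ) ^ 2 := by
  have h1 : ∑ A ∈ P.parts, ∑ B ∈ P.parts, (eCnt G A B : ℝ) = ∑ v, (G.degree v : ℝ) := by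
    simp_rw [eCnt_eq_sum]
    rw [← sum_parts_sum P]
    refine Finset.sum_congr rfl fun A _ => ?_
    rw [Finset.sum_comm]
    refine Finset.sum_congr rfl fun a _ => ?_
    rw [sum_parts_sum P, Finset.sum_boole, ← G.card_neighborFinset_eq_degree,
      G.neighborFinset_eq_filter]
  rw [h1, ← Nat.cast_sum, G.sum_degrees_eq_twice_card_edges, graphDensity]
  have h2 : G.edgeSet.ncard = G.edgeFinset.card := by
    rw [← G.coe_edgeFinset, Set.ncard_coe_finset]
  rcases isEmpty_or_nonempty V with hV | hV
  · have : G.edgeFinset.card = 0 := by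
      rw [Finset.card_eq_zero]
      ext e
      induction e with | _ a b => exact hV.elim a
    simp [this]
  · rw [h2]
    have : (Fintype.card V : ℝ) ≠ 0 := by exact_mod_cast Fintype.card_ne_zero
    field_simp
    push_cast
    ring

lemma card_sq_mul_pot (P : Finpartition (univ : Finset V)) (hV : (Fintype.card V : ℝ) ≠ 0) :
    (Fintype.card V : ℝ) ^ 2 * pot G P P
      = ∑ A ∈ P.parts, ∑ B ∈ P.parts, (eCnt G A B : ℝ) * Real.log (dens G A B) := by
  simp_rw [pot, Finset.mul_sum, Finset.card_univ, Hent, ← card_mul_card_mul_dens]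
  refine Finset.sum_congr rfl fun A _ => Finset.sum_congr rfl fun B _ => ?_
  field_simp

/-- The relative-entropy estimate within one pair `(A, B)` of parts of `P`. -/
lemma pair_estimate {s : Finset V} {P Q : Finpartition s} (hQP : Q ≤ P) {A B : Finset V}
    (hA : A ∈ P.parts) (hB : B ∈ P.parts) (x : ℝ) :
    2 * x * (∑ U ∈ Q.parts.filter (· ⊆ A), ∑ U' ∈ Q.parts.filter (· ⊆ B),
        (U.card : ℝ) * U'.card * |dens G U U' - dens G A B|) - 2 * x ^ 2 * eCnt G A B
      ≤ (∑ U ∈ Q.parts.filter (· ⊆ A), ∑ U' ∈ Q.parts.filter (· ⊆ B),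
        (eCnt G U U' : ℝ) * Real.log (dens G U U'))
          - eCnt G A B * Real.log (dens G A B) := by
  have hpt : ∀ U ∈ Q.parts.filter (· ⊆ A), ∀ U' ∈ Q.parts.filter (· ⊆ B),
      2 * x * ((U.card : ℝ) * U'.card * |dens G U U' - dens G A B|)
          - 2 / 3 * x ^ 2 * (eCnt G U U' + 2 * ((U.card : ℝ) * U'.card * dens G A B))
        ≤ (eCnt G U U' : ℝ) * Real.log (dens G U U') - eCnt G U U' * Real.log (dens G A B)
          - eCnt G U U' + (U.card : ℝ) * U'.card * dens G A B := by
    intro U hU U' hU'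
    have h0 : dens G A B = 0 → dens G U U' = 0 := by
      intro h
      have hAB : eCnt G A B = 0 := by
        have := card_mul_card_mul_dens G A B
        rw [h, mul_zero] at this
        exact_mod_cast this.symm
      have := eCnt_mono G (Finset.mem_filter.1 hU).2 (Finset.mem_filter.1 hU').2
      rw [hAB, Nat.le_zero] at this
      simp [_root_.dens, this]
    have := mul_le_mul_of_nonneg_left
      (pinsker_pointwise (dens_nonneg G U U') (dens_nonneg G A B) h0 x)
      (show (0 : ℝ) ≤ (U.card : ℝ) * U'.card by positivity)
    rw [← card_mul_card_mul_dens]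
    linarith
  have hsum := Finset.sum_le_sum fun U hU => Finset.sum_le_sum (hpt U hU)
  simp only [Finset.sum_add_distrib, Finset.sum_sub_distrib, ← Finset.mul_sum,
    ← Finset.sum_mul] at hsum
  have hc := sum_filter_card hQP hA hB
  simp only [← Finset.mul_sum, ← Finset.sum_mul] at hc
  rw [sum_filter_eCnt G hQP hA hB, hc, card_mul_card_mul_dens] at hsum
  linarith

end Partitions

/-- **Entropy-distance versus `ℓ₁`-distance (Lemma 3.6).**
If `G` has density `p > 0`, `Q` refines `P` and `D(Q,P) ≥ x·p·n²`, then
`H(Q) − H(P) ≥ 2x²p`. -/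
theorem potential_vs_l1 {V : Type*} [Fintype V] [DecidableEq V] (G : SimpleGraph V)
    (p : ℝ) (hp : 0 < p) (hpd : graphDensity G = p)
    (P Q : Finpartition (univ : Finset V)) (hQP : Q ≤ P)
    (x : ℝ) (hx : 0 ≤ x)
    (hD : x * p * (Fintype.card V : ℝ) ^ 2 ≤ Ddist G Q P) :
    2 * x ^ 2 * p ≤ pot G Q Q - pot G P P := by
  have hV : (Fintype.card V : ℝ) ≠ 0 := by
    -- on the empty vertex set the density is `0 / 0 = 0`
    intro h
    rw [graphDensity, h] at hpd
    norm_num at hpd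
    exact hp.ne hpd
  have hsum := Finset.sum_le_sum fun A hA => Finset.sum_le_sum fun B hB =>
    pair_estimate G hQP (A := A) (B := B) hA hB x
  simp only [Finset.sum_sub_distrib, ← Finset.mul_sum] at hsum
  have hQ : ∑ A ∈ P.parts, ∑ B ∈ P.parts, ∑ U ∈ Q.parts.filter (· ⊆ A),
      ∑ U' ∈ Q.parts.filter (· ⊆ B), (eCnt G U U' : ℝ) * Real.log (dens G U U')
      = (Fintype.card V : ℝ) ^ 2 * pot G Q Q := by
    rw [card_sq_mul_pot G Q hV, ← sum_parts_filter hQP]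
    refine Finset.sum_congr rfl fun A _ => ?_
    rw [Finset.sum_comm]
    exact Finset.sum_congr rfl fun U _ => sum_parts_filter hQP _
  rw [hQ, ← card_sq_mul_pot G P hV, sum_eCnt_parts, hpd] at hsum
  have hD' := mul_le_mul_of_nonneg_left hD (mul_nonneg (zero_le_four (α := ℝ)) hx)
  unfold Ddist at hD'
  have hn : (0 : ℝ) < (Fintype.card V : ℝ) ^ 2 := by positivity
  refine le_of_mul_le_mul_left ?_ hn
  linarith
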